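/- For fixed B ⊆ [n], E ⊆ [n]\B, I ⊆ B, the function G_{B,E,I}(M) = 1 if B is a basis of M with E(B) = E and I(B) = I, and 0 otherwise, is a valuation under matroid subdivisions. Consequently the basis-activity generating function F(M) = Σ_{B basis of M} (B, E(B), I(B)), valued in the free abelian group on triples (B,E,I), is a valuation. -/

import Mathlib

open Finset
open scoped Pointwise

/-- The indicator vector `e_B ∈ ℝⁿ` of a subset `B ⊆ [n]`. -/
def indVec (n : ℕ) (B : Finset (Fin n)) : Fin n → ℝ := fun i => if i ∈ B then 1 else 0

/-- A collection of subsets of `[n]` is the collection of bases of a matroid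
(possibly the empty matroid) iff it satisfies the basis exchange axiom. -/
def IsBases {n : ℕ} (𝓑 : Finset (Finset (Fin n))) : Prop :=
  ∀ B₁ ∈ 𝓑, ∀ B₂ ∈ 𝓑, ∀ b₁ ∈ B₁ \ B₂, ∃ b₂ ∈ B₂ \ B₁, insert b₂ (B₁.erase b₁) ∈ 𝓑

/-- The matroid (basis) polytope: convex hull of indicator vectors of the bases. -/
def polytope {n : ℕ} (𝓑 : Finset (Finset (Fin n))) : Set (Fin n → ℝ) :=
  convexHull ℝ (indVec n '' ↑𝓑)

/-- `a ∉ B` is externally active w.r.t. the basis `B` if `a < b` for every `b ∈ B`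
such that `B - b ∪ a` is a basis. -/
def ExtActive {n : ℕ} (𝓑 : Finset (Finset (Fin n))) (B : Finset (Fin n)) (a : Fin n) : Prop :=
  a ∉ B ∧ ∀ b ∈ B, insert a (B.erase b) ∈ 𝓑 → a < b

/-- `b ∈ B` is internally active w.r.t. the basis `B` if `b < a` for every `a ∉ B`
such that `B - b ∪ a` is a basis. -/
def IntActive {n : ℕ} (𝓑 : Finset (Finset (Fin n))) (B : Finset (Fin n)) (b : Fin n) : Prop :=
  b ∈ B ∧ ∀ a, a ∉ B → insert a (B.erase b) ∈ 𝓑 → b < a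

/-- A subdivision of a polytope `P` into polytopes `Ps i`: their union is `P`,
their vertices are vertices of `P`, and each pairwise intersection is a proper
(exposed) face of both pieces. -/
def IsSubdivision {n m : ℕ} (P : Set (Fin n → ℝ)) (Ps : Fin m → Set (Fin n → ℝ)) : Prop :=
  (⋃ i, Ps i) = P ∧
  (∀ i, Set.extremePoints ℝ (Ps i) ⊆ Set.extremePoints ℝ P) ∧
  ∀ i j, i ≠ j →
    IsExposed ℝ (Ps i) (Ps i ∩ Ps j) ∧ IsExposed ℝ (Ps j) (Ps i ∩ Ps j) ∧
    Ps i ∩ Ps j ≠ Ps i ∧ Ps i ∩ Ps j ≠ Ps j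

/-- A matroid subdivision of the matroid `𝓑` into the matroids `𝓜 i`. -/
def IsMatroidSubdivision {n m : ℕ} (𝓑 : Finset (Finset (Fin n)))
    (𝓜 : Fin m → Finset (Finset (Fin n))) : Prop :=
  IsBases 𝓑 ∧ (∀ i, IsBases (𝓜 i)) ∧ IsSubdivision (polytope 𝓑) fun i => polytope (𝓜 i)

open Classical in
/-- For `A ⊆ [m]`, the matroid `M_A` whose polytope is `⋂_{a ∈ A} Q(M_a)`:
its bases are the bases of `M` whose indicator vector lies in every `Q(M_a)`, `a ∈ A`.
For `A = ∅` this is `M` itself. -/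
noncomputable def interMatroid {n m : ℕ} (𝓑 : Finset (Finset (Fin n)))
    (𝓜 : Fin m → Finset (Finset (Fin n))) (A : Finset (Fin m)) : Finset (Finset (Fin n)) :=
  𝓑.filter fun B => ∀ a ∈ A, indVec n B ∈ polytope (𝓜 a)

/-- `f` is a valuation under matroid subdivisions:
`∑_{A ⊆ [m]} (-1)^{|A|} f(M_A) = 0` for every matroid subdivision. -/
def IsValuation {n : ℕ} {G : Type*} [AddCommGroup G] (f : Finset (Finset (Fin n)) → G) : Prop :=
  ∀ (m : ℕ) (𝓑 : Finset (Finset (Fin n))) (𝓜 : Fin m → Finset (Finset (Fin n))),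
    IsMatroidSubdivision 𝓑 𝓜 →
    ∑ A : Finset (Fin m), (-1 : ℤ) ^ A.card • f (interMatroid 𝓑 𝓜 A) = 0

open Classical in
/-- The set `E(B)` of externally active elements of `B`. -/
noncomputable def EAset {n : ℕ} (𝓑 : Finset (Finset (Fin n))) (B : Finset (Fin n)) :
    Finset (Fin n) :=
  Finset.univ.filter fun a => ExtActive 𝓑 B a

open Classical in
/-- The set `I(B)` of internally active elements of `B`. -/
noncomputable def IAset {n : ℕ} (𝓑 : Finset (Finset (Fin n))) (B : Finset (Fin n)) :
    Finset (Fin n) :=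
  Finset.univ.filter fun b => IntActive 𝓑 B b

/-!
A compact convex set has Euler characteristic `1`, so a linear relation between indicator functions
of compact convex sets survives replacing each indicator by `1` if the set is nonempty and `0`
otherwise. On the line this follows by comparing the relation at a point and just to the right of
it; in `ℝⁿ` it follows coordinate by coordinate, from the fibres of a linear functional. Applied to
inclusion–exclusion for `Q(M) = ⋃ Q(Mᵢ)` intersected with a closed convex set `X`, and since the
cells of a matroid subdivision are faces and hence again matroid polytopes, this makes
`M ↦ [Q(M) ∩ X ≠ ∅]` a valuation.

Taking `X = {e_B}` gives `[B ∈ M]`. Taking for `X` a small polytope near `e_B`, spanned by points in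
the directions of the exchanges at `B` that increase a weight `w`, detects whether `B` is a basis
admitting such an exchange: locally optimal bases are globally optimal. For a suitable `w` there is
no such exchange exactly when `E ⊆ E(B)` and `I ⊆ I(B)`, and Möbius inversion over pairs `(E, I)`
turns the inclusions into equalities.
-/

section EulerRelation

variable {ι G : Type*} [AddCommGroup G]

open scoped Topology

lemma sum_filter_right_endpoint_eq_zero {α : Type*} [LinearOrder α] [TopologicalSpace α]
    [OrderTopology α] [DenselyOrdered α] [NoMaxOrder α] {s : Finset ι} {c : ι → G} {a b : ι → α}
    (hab : ∀ j ∈ s, a j ≤ b j) (h : ∀ t, ∑ j ∈ s with t ∈ Set.Icc (a j) (b j), c j = 0) (t : α) :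
    ∑ j ∈ s with b j = t, c j = 0 := by
  have eventually_lt : ∀ y, ∀ᶠ u in 𝓝[>] t, t < y → u < y := fun y ↦ by
    by_cases hy : t < y
    · filter_upwards [Ioo_mem_nhdsGT hy] with u hu _ using hu.2
    · exact .of_forall fun _ h ↦ absurd h hy
  have eventually_lt_endpoints :
      ∀ᶠ u in 𝓝[>] t, ∀ j ∈ s, (t < a j → u < a j) ∧ (t < b j → u < b j) :=
    (Filter.eventually_all_finset s).2 fun j _ ↦ (eventually_lt _).and (eventually_lt _)
  obtain ⟨u, hu, htu : t < u⟩ := (eventually_lt_endpoints.and self_mem_nhdsWithin).exists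
  -- Among the intervals that contain `t`, those that miss `u` are the ones that end at `t`.
  have hsplit := sum_filter_add_sum_filter_not {j ∈ s | t ∈ Set.Icc (a j) (b j)}
    (fun j ↦ u ∈ Set.Icc (a j) (b j)) c
  rw [h t, filter_filter, filter_filter] at hsplit
  have hboth : {j ∈ s | t ∈ Set.Icc (a j) (b j) ∧ u ∈ Set.Icc (a j) (b j)} =
      {j ∈ s | u ∈ Set.Icc (a j) (b j)} :=
    filter_congr fun j hj ↦ and_iff_right_of_imp fun hju ↦
      ⟨not_lt.1 fun hlt ↦ ((hu j hj).1 hlt).not_ge hju.1, htu.le.trans hju.2⟩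
  have honly : {j ∈ s | t ∈ Set.Icc (a j) (b j) ∧ u ∉ Set.Icc (a j) (b j)} =
      {j ∈ s | b j = t} := by
    refine filter_congr fun j hj ↦ ⟨fun ⟨ht, hju⟩ ↦ ?_, ?_⟩
    · exact (ht.2.eq_or_lt.resolve_right fun hlt ↦
        hju ⟨ht.1.trans htu.le, ((hu j hj).2 hlt).le⟩).symm
    · rintro rfl
      exact ⟨⟨hab j hj, le_rfl⟩, fun hju ↦ htu.not_ge hju.2⟩
  rwa [hboth, h u, zero_add, honly] at hsplit

lemma sum_eq_zero_of_sum_filter_mem_Icc_eq_zero {α : Type*} [LinearOrder α] [TopologicalSpace α]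
    [OrderTopology α] [DenselyOrdered α] [NoMaxOrder α] {s : Finset ι} {c : ι → G} {a b : ι → α}
    (hab : ∀ j ∈ s, a j ≤ b j) (h : ∀ t, ∑ j ∈ s with t ∈ Set.Icc (a j) (b j), c j = 0) :
    ∑ j ∈ s, c j = 0 := by
  rw [← sum_fiberwise_of_maps_to fun j hj ↦ mem_image_of_mem b hj]
  exact sum_eq_zero fun t _ ↦ sum_filter_right_endpoint_eq_zero hab h t

variable {E : Type*} [AddCommGroup E] [Module ℝ E] [TopologicalSpace E]
  {s : Finset ι} {c : ι → G} {K : ι → Set E}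

open Classical in
lemma sum_filter_nonempty_eq_zero_of_fibers (f : E →L[ℝ] ℝ) (hcomp : ∀ j ∈ s, IsCompact (K j))
    (hconv : ∀ j ∈ s, Convex ℝ (K j))
    (h : ∀ t, ∑ j ∈ s with (K j ∩ f ⁻¹' {t}).Nonempty, c j = 0) :
    ∑ j ∈ s with (K j).Nonempty, c j = 0 := by
  have image_eq_Icc : ∀ j ∈ s, (K j).Nonempty →
      f '' K j = Set.Icc (sInf (f '' K j)) (sSup (f '' K j)) := fun j hj hne ↦
    eq_Icc_of_connected_compact
      ⟨hne.image f, ((hconv j hj).linear_image f.toLinearMap).isPreconnected⟩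
      ((hcomp j hj).image f.continuous)
  refine sum_eq_zero_of_sum_filter_mem_Icc_eq_zero (a := fun j ↦ sInf (f '' K j))
    (b := fun j ↦ sSup (f '' K j)) (fun j hj ↦ ?_) fun t ↦ ?_
  · obtain ⟨hj, hne⟩ := mem_filter.1 hj
    exact Set.nonempty_Icc.1 (image_eq_Icc j hj hne ▸ hne.image f)
  · rw [← h t, filter_filter]
    refine sum_congr (filter_congr fun j hj ↦ ⟨fun ⟨hne, ht⟩ ↦ ?_, fun ⟨x, hx, hxt⟩ ↦ ?_⟩)
      fun _ _ ↦ rfl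
    · rw [← image_eq_Icc j hj hne] at ht
      exact ht
    · rw [← image_eq_Icc j hj ⟨x, hx⟩]
      exact ⟨⟨x, hx⟩, x, hx, hxt⟩

open Classical in
lemma sum_filter_nonempty_eq_zero_of_joint_fibers {κ : Type*} (f : κ → E →L[ℝ] ℝ)
    (r : Finset κ) (hcomp : ∀ j ∈ s, IsCompact (K j)) (hconv : ∀ j ∈ s, Convex ℝ (K j))
    (h : ∀ y : κ → ℝ, ∑ j ∈ s with (K j ∩ {x | ∀ k ∈ r, f k x = y k}).Nonempty, c j = 0) :
    ∑ j ∈ s with (K j).Nonempty, c j = 0 := by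
  induction r using Finset.induction_on generalizing K with
  | empty => simpa using h 0
  | insert i r hi ih =>
    refine sum_filter_nonempty_eq_zero_of_fibers (f i) hcomp hconv fun t ↦ ?_
    refine ih (fun j hj ↦ (hcomp j hj).inter_right (isClosed_singleton.preimage (f i).continuous))
      (fun j hj ↦ (hconv j hj).inter ((convex_singleton t).linear_preimage (f i).toLinearMap))
      fun y ↦ ?_
    have joint_fiber_insert : {x | ∀ k ∈ insert i r, f k x = Function.update y i t k} =
        f i ⁻¹' {t} ∩ {x | ∀ k ∈ r, f k x = y k} := by
      ext x
      have hne : ∀ k ∈ r, k ≠ i := fun k hk ↦ ne_of_mem_of_not_mem hk hi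
      simp +contextual [hne]
    simpa only [joint_fiber_insert, Set.inter_assoc] using h (Function.update y i t)

open Classical in
theorem sum_filter_nonempty_eq_zero [IsTopologicalAddGroup E] [ContinuousSMul ℝ E] [T2Space E]
    [FiniteDimensional ℝ E] (hcomp : ∀ j ∈ s, IsCompact (K j)) (hconv : ∀ j ∈ s, Convex ℝ (K j))
    (h : ∀ x, ∑ j ∈ s with x ∈ K j, c j = 0) :
    ∑ j ∈ s with (K j).Nonempty, c j = 0 := by
  let b := Module.finBasis ℝ E
  refine sum_filter_nonempty_eq_zero_of_joint_fibers
    (fun k ↦ (b.coord k).toContinuousLinearMap) univ hcomp hconv fun y ↦ ?_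
  have joint_fiber : {x | ∀ k ∈ univ, (b.coord k).toContinuousLinearMap x = y k} =
      {b.equivFun.symm y} := by
    ext x
    simpa [funext_iff] using b.equivFun.eq_symm_apply (x := y) (y := x) |>.symm
  simpa only [joint_fiber, Set.inter_singleton_nonempty] using h (b.equivFun.symm y)

end EulerRelation

section InclusionExclusion

variable {κ : Type*} [Fintype κ]

open Classical in
lemma sum_filter_mem_inter_biInter_neg_one_pow_card {X : Type*} {P : Set X} {Q : κ → Set X}
    (hQ : ⋃ i, Q i = P) (x : X) :
    ∑ A : Finset κ with x ∈ P ∩ ⋂ i ∈ A, Q i, (-1 : ℤ) ^ #A = 0 := by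
  by_cases hx : x ∈ P
  · have hne : ({i | x ∈ Q i} : Finset κ).Nonempty := by
      obtain ⟨i, hi⟩ := Set.mem_iUnion.1 (hQ ▸ hx)
      exact ⟨i, by simpa using hi⟩
    rw [← sum_powerset_neg_one_pow_card_of_nonempty hne]
    refine sum_congr ?_ fun _ _ ↦ rfl
    ext A
    simp [hx, subset_iff]
  · simp [hx]

open Classical in
lemma sum_filter_nonempty_inter_biInter_neg_one_pow_card {E : Type*} [AddCommGroup E]
    [Module ℝ E] [TopologicalSpace E] [IsTopologicalAddGroup E] [ContinuousSMul ℝ E] [T2Space E]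
    [FiniteDimensional ℝ E] {P X : Set E} {Q : κ → Set E} (hQ : ⋃ i, Q i = P)
    (hPcomp : IsCompact P) (hPconv : Convex ℝ P) (hQclosed : ∀ i, IsClosed (Q i))
    (hQconv : ∀ i, Convex ℝ (Q i)) (hXclosed : IsClosed X) (hXconv : Convex ℝ X) :
    ∑ A : Finset κ with (P ∩ (⋂ i ∈ A, Q i) ∩ X).Nonempty, (-1 : ℤ) ^ #A = 0 := by
  refine sum_filter_nonempty_eq_zero (fun A _ ↦ ?_) (fun A _ ↦ ?_) fun x ↦ ?_
  · exact (hPcomp.inter_right (isClosed_biInter fun i _ ↦ hQclosed i)).inter_right hXclosed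
  · exact (hPconv.inter (convex_iInter₂ fun i _ ↦ hQconv i)).inter hXconv
  · by_cases hx : x ∈ X
    · simpa [hx] using sum_filter_mem_inter_biInter_neg_one_pow_card hQ x
    · simp [hx]

end InclusionExclusion

section SymmetricExchange

lemma isBase_insert_diff_of_mem_fundCircuit {α : Type*} {M : Matroid α} {B : Set α}
    (hB : M.IsBase B) {e f : α} (he : e ∈ M.E) (heB : e ∉ B) (hfB : f ∈ B)
    (hf : f ∈ M.fundCircuit e B) : M.IsBase (insert e (B \ {f})) := by
  rw [hB.indep.mem_fundCircuit_iff (hB.closure_eq ▸ he) heB] at hf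
  rw [← Set.insert_sdiff_singleton_comm (ne_of_mem_of_not_mem hfB heB).symm] at hf
  exact hB.exchange_isBase_of_indep heB hf

theorem exists_symm_exchange_of_isBase {α : Type*} {M : Matroid α} {B B' : Set α}
    (hB : M.IsBase B) (hB' : M.IsBase B') {b : α} (hb : b ∈ B \ B') :
    ∃ a ∈ B' \ B, M.IsBase (insert a (B \ {b})) ∧ M.IsBase (insert b (B' \ {a})) := by
  have hbE : b ∈ M.E := hB.subset_ground hb.1
  -- A circuit and a cocircuit never meet in exactly one element; both of these contain `b`.
  obtain ⟨a, ⟨haC, haK⟩, hab⟩ :=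
    ((hB'.fundCircuit_isCircuit hbE hb.2).isCocircuit_inter_nontrivial
      (M.fundCocircuit_isCocircuit hb.1 hB)
      ⟨b, M.mem_fundCircuit b B', M.mem_fundCocircuit b B⟩).exists_ne b
  have haB' : a ∈ B' := Set.mem_of_mem_insert_of_ne (M.fundCircuit_subset_insert b B' haC) hab
  have haB : a ∉ B :=
    (Set.mem_of_mem_insert_of_ne (M.fundCocircuit_subset_insert_compl b B haK) hab).2
  exact ⟨a, ⟨haB', haB⟩,
    isBase_insert_diff_of_mem_fundCircuit hB (hB'.subset_ground haB') haB hb.1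
      (hB.mem_fundCocircuit_iff_mem_fundCircuit.1 haK),
    isBase_insert_diff_of_mem_fundCircuit hB' hbE hb.2 haB' haC⟩

variable {n : ℕ} {𝓑 : Finset (Finset (Fin n))}

/-- The Mathlib matroid on `[n]` whose bases are the members of a nonempty basis collection. -/
def IsBases.matroid (h𝓑 : IsBases 𝓑) (hne : 𝓑.Nonempty) : Matroid (Fin n) :=
  Matroid.ofIsBaseOfFinite Set.finite_univ (fun X ↦ ∃ B ∈ 𝓑, (B : Set (Fin n)) = X)
    (hne.elim fun B hB ↦ ⟨B, B, hB, rfl⟩)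
    (by
      rintro _ _ ⟨B, hB, rfl⟩ ⟨B', hB', rfl⟩ b hb
      obtain ⟨a, ha, hBa⟩ := h𝓑 B hB B' hB' b (by simpa using hb)
      exact ⟨a, by simpa using ha, _, hBa, by simp⟩)
    fun _ _ ↦ Set.subset_univ _

@[simp]
lemma IsBases.matroid_isBase_coe (h𝓑 : IsBases 𝓑) (hne : 𝓑.Nonempty) {B : Finset (Fin n)} :
    (h𝓑.matroid hne).IsBase B ↔ B ∈ 𝓑 := by
  change (∃ C ∈ 𝓑, (C : Set (Fin n)) = B) ↔ B ∈ 𝓑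
  simp

theorem IsBases.exists_symm_exchange (h𝓑 : IsBases 𝓑) {B B' : Finset (Fin n)} (hB : B ∈ 𝓑)
    (hB' : B' ∈ 𝓑) {b : Fin n} (hb : b ∈ B \ B') :
    ∃ a ∈ B' \ B, insert a (B.erase b) ∈ 𝓑 ∧ insert b (B'.erase a) ∈ 𝓑 := by
  have hne : 𝓑.Nonempty := ⟨B, hB⟩
  obtain ⟨a, ha, hBa, hB'b⟩ := exists_symm_exchange_of_isBase
    ((h𝓑.matroid_isBase_coe hne).2 hB) ((h𝓑.matroid_isBase_coe hne).2 hB') (b := b)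
    (by simpa using hb)
  refine ⟨a, by simpa using ha, (h𝓑.matroid_isBase_coe hne).1 ?_,
    (h𝓑.matroid_isBase_coe hne).1 ?_⟩
  · simpa using hBa
  · simpa using hB'b

end SymmetricExchange

section BasisPolytope

variable {n : ℕ} {𝓑 : Finset (Finset (Fin n))} {B B' : Finset (Fin n)} {a b : Fin n}

lemma indVec_insert_erase (ha : a ∉ B) (hb : b ∈ B) :
    indVec n (insert a (B.erase b)) = indVec n B + Pi.single a 1 - Pi.single b 1 := by
  have hab : a ≠ b := (ne_of_mem_of_not_mem hb ha).symm
  ext i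
  rcases eq_or_ne i a with rfl | hia
  · simp [indVec, ha, hab]
  rcases eq_or_ne i b with rfl | hib
  · simp [indVec, hb, hia]
  · simp [indVec, hia, hib]

lemma indVec_insert_erase_add (hb : b ∈ B \ B') (ha : a ∈ B' \ B) :
    indVec n (insert a (B.erase b)) + indVec n (insert b (B'.erase a)) =
      indVec n B + indVec n B' := by
  rw [mem_sdiff] at ha hb
  rw [indVec_insert_erase ha.2 hb.1, indVec_insert_erase hb.2 ha.1]
  abel

lemma dotProduct_indVec_insert_erase (w : Fin n → ℝ) (ha : a ∉ B) (hb : b ∈ B) :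
    w ⬝ᵥ indVec n (insert a (B.erase b)) = w ⬝ᵥ indVec n B + w a - w b := by
  simp [indVec_insert_erase ha hb, dotProduct_add, dotProduct_sub]

lemma isCompact_polytope (𝓑 : Finset (Finset (Fin n))) : IsCompact (polytope 𝓑) :=
  (Set.toFinite _).isCompact_convexHull ℝ

lemma convex_polytope (𝓑 : Finset (Finset (Fin n))) : Convex ℝ (polytope 𝓑) :=
  convex_convexHull ℝ _

lemma exists_dotProduct_le_of_mem_polytope (w : Fin n → ℝ) {x : Fin n → ℝ}
    (hx : x ∈ polytope 𝓑) : ∃ B ∈ 𝓑, w ⬝ᵥ x ≤ w ⬝ᵥ indVec n B := by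
  obtain ⟨_, ⟨B, hB, rfl⟩, hle⟩ := ((dotProductBilin ℝ ℝ w).convexOn convex_univ
    ).exists_ge_of_mem_convexHull (Set.subset_univ _) hx
  exact ⟨B, hB, hle⟩

/-- The `±1` vector of `B`, as a linear functional on the cube `[0,1]ⁿ`: it is maximal exactly at
`e_B`, and drops by at least `1` at every other vertex. -/
def signVec (B : Finset (Fin n)) : Fin n → ℝ := fun i ↦ if i ∈ B then 1 else -1

lemma signVec_dotProduct_indVec_add_one_le (h : B ≠ B') :
    signVec B ⬝ᵥ indVec n B' + 1 ≤ signVec B ⬝ᵥ indVec n B := by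
  obtain ⟨i, hi⟩ : ∃ i, ¬(i ∈ B ↔ i ∈ B') := by simpa [Finset.ext_iff] using h
  have hterm : ∀ j, signVec B j * (indVec n B j - indVec n B' j) =
      if j ∈ B ↔ j ∈ B' then 0 else 1 := fun j ↦ by
    by_cases hj : j ∈ B <;> by_cases hj' : j ∈ B' <;> simp [signVec, indVec, hj, hj']
  have hone : 1 ≤ ∑ j, signVec B j * (indVec n B j - indVec n B' j) := by
    refine le_trans ?_ (single_le_sum (fun j _ ↦ ?_) (mem_univ i))
    · rw [hterm, if_neg hi]
    · rw [hterm]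
      positivity
  have hsub : ∑ j, signVec B j * (indVec n B j - indVec n B' j) =
      signVec B ⬝ᵥ indVec n B - signVec B ⬝ᵥ indVec n B' := by
    rw [← dotProduct_sub]
    rfl
  linarith

lemma mem_of_mem_polytope_of_lt_signVec_dotProduct {x : Fin n → ℝ} (hx : x ∈ polytope 𝓑)
    (hlt : signVec B ⬝ᵥ indVec n B < signVec B ⬝ᵥ x + 1) : B ∈ 𝓑 := by
  obtain ⟨C, hC, hle⟩ := exists_dotProduct_le_of_mem_polytope (signVec B) hx
  suffices B = C from this ▸ hC
  by_contra hne
  linarith [signVec_dotProduct_indVec_add_one_le hne]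

@[simp]
lemma indVec_mem_polytope : indVec n B ∈ polytope 𝓑 ↔ B ∈ 𝓑 :=
  ⟨fun h ↦ mem_of_mem_polytope_of_lt_signVec_dotProduct h (by linarith),
    fun h ↦ subset_convexHull ℝ _ ⟨B, h, rfl⟩⟩

end BasisPolytope

section Faces

variable {n : ℕ} {𝓑 : Finset (Finset (Fin n))} {F : Set (Fin n → ℝ)}

open Classical in
lemma polytope_filter_of_isExtreme (hF : IsExtreme ℝ (polytope 𝓑) F) (hcomp : IsCompact F)
    (hconv : Convex ℝ F) : polytope {B ∈ 𝓑 | indVec n B ∈ F} = F := by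
  refine Set.Subset.antisymm (convexHull_min ?_ hconv) ?_
  · rintro _ ⟨B, hB, rfl⟩
    exact (mem_filter.1 hB).2
  · refine (closure_convexHull_extremePoints hcomp hconv).symm.subset.trans
      (closure_minimal (convexHull_mono fun x hx ↦ ?_) (isCompact_polytope _).isClosed)
    obtain ⟨B, hB, rfl⟩ :=
      extremePoints_convexHull_subset (hF.extremePoints_subset_extremePoints hx)
    exact ⟨B, mem_filter.2 ⟨hB, extremePoints_subset hx⟩, rfl⟩

open Classical in
lemma IsBases.filter_of_isExtreme (h𝓑 : IsBases 𝓑) (hF : IsExtreme ℝ (polytope 𝓑) F)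
    (hconv : Convex ℝ F) : IsBases {B ∈ 𝓑 | indVec n B ∈ F} := by
  intro B hB B' hB' b hb
  rw [mem_filter] at hB hB'
  obtain ⟨a, ha, hBa, hB'b⟩ := h𝓑.exists_symm_exchange hB.1 hB'.1 hb
  refine ⟨a, ha, mem_filter.2 ⟨hBa, ?_⟩⟩
  -- The exchange preserves the midpoint, and an extreme set that contains the midpoint of a
  -- segment contains the endpoints.
  refine hF.left_mem_of_mem_openSegment (indVec_mem_polytope.2 hBa) (indVec_mem_polytope.2 hB'b)
    (hconv.midpoint_mem hB.2 hB'.2) ?_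
  rw [midpoint_eq_smul_add, ← indVec_insert_erase_add hb ha, ← midpoint_eq_smul_add]
  exact midpoint_mem_openSegment _ _

end Faces

namespace IsMatroidSubdivision

variable {n m : ℕ} {𝓑 : Finset (Finset (Fin n))} {𝓜 : Fin m → Finset (Finset (Fin n))}
  {A : Finset (Fin m)} {i : Fin m}

lemma polytope_subset (h : IsMatroidSubdivision 𝓑 𝓜) (i : Fin m) :
    polytope (𝓜 i) ⊆ polytope 𝓑 :=
  (Set.subset_iUnion (fun i ↦ polytope (𝓜 i)) i).trans h.2.2.1.subset

lemma isExtreme_biInter (h : IsMatroidSubdivision 𝓑 𝓜) (hi : i ∈ A) :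
    IsExtreme ℝ (polytope (𝓜 i)) (⋂ j ∈ A, polytope (𝓜 j)) := by
  have : Nonempty A := ⟨⟨i, hi⟩⟩
  have hface : ∀ j : A, IsExtreme ℝ (polytope (𝓜 i)) (polytope (𝓜 i) ∩ polytope (𝓜 j)) := by
    intro j
    rcases eq_or_ne i j with hij | hij
    · rw [← hij, Set.inter_self]
    · exact (h.2.2.2.2 i j hij).1.isExtreme
  have hinter : ⋂ j ∈ A, polytope (𝓜 j) = ⋂ j : A, polytope (𝓜 i) ∩ polytope (𝓜 j) := by
    rw [← Set.inter_iInter, Set.iInter_subtype]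
    exact (Set.inter_eq_right.2 (Set.biInter_subset_of_mem hi)).symm
  exact hinter ▸ isExtreme_iInter hface

open Classical in
lemma interMatroid_eq_filter (h : IsMatroidSubdivision 𝓑 𝓜) (hi : i ∈ A) :
    interMatroid 𝓑 𝓜 A = {B ∈ 𝓜 i | indVec n B ∈ ⋂ j ∈ A, polytope (𝓜 j)} := by
  ext B
  simp only [interMatroid, mem_filter, Set.mem_iInter]
  refine and_congr_left fun hA ↦ ⟨fun _ ↦ indVec_mem_polytope.1 (hA i hi), fun hB ↦ ?_⟩
  exact indVec_mem_polytope.1 (h.polytope_subset i (indVec_mem_polytope.2 hB))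

lemma isBases_interMatroid (h : IsMatroidSubdivision 𝓑 𝓜) (A : Finset (Fin m)) :
    IsBases (interMatroid 𝓑 𝓜 A) := by
  rcases A.eq_empty_or_nonempty with rfl | ⟨i, hi⟩
  · simpa [interMatroid] using h.1
  · rw [h.interMatroid_eq_filter hi]
    exact (h.2.1 i).filter_of_isExtreme (h.isExtreme_biInter hi)
      (convex_iInter₂ fun j _ ↦ convex_polytope _)

lemma polytope_interMatroid (h : IsMatroidSubdivision 𝓑 𝓜) (A : Finset (Fin m)) :
    polytope (interMatroid 𝓑 𝓜 A) = polytope 𝓑 ∩ ⋂ j ∈ A, polytope (𝓜 j) := by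
  rcases A.eq_empty_or_nonempty with rfl | ⟨i, hi⟩
  · simp [interMatroid]
  · have hsub : ⋂ j ∈ A, polytope (𝓜 j) ⊆ polytope (𝓜 i) := Set.biInter_subset_of_mem hi
    rw [h.interMatroid_eq_filter hi, polytope_filter_of_isExtreme (h.isExtreme_biInter hi),
      Set.inter_eq_right.2 (hsub.trans (h.polytope_subset i))]
    · exact (isCompact_polytope (𝓜 i)).of_isClosed_subset
        (isClosed_biInter fun j _ ↦ (isCompact_polytope _).isClosed) hsub
    · exact convex_iInter₂ fun j _ ↦ convex_polytope _

end IsMatroidSubdivision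

section Valuations

variable {n : ℕ} {G : Type*} [AddCommGroup G]

namespace IsValuation

variable {f g : Finset (Finset (Fin n)) → G}

lemma congr (hf : IsValuation f) (h : ∀ 𝓑, IsBases 𝓑 → f 𝓑 = g 𝓑) : IsValuation g := by
  intro m 𝓑 𝓜 hsub
  simpa only [h _ (hsub.isBases_interMatroid _)] using hf m 𝓑 𝓜 hsub

lemma sub (hf : IsValuation f) (hg : IsValuation g) : IsValuation fun 𝓑 ↦ f 𝓑 - g 𝓑 := by
  intro m 𝓑 𝓜 hsub
  simp [smul_sub, hf m 𝓑 𝓜 hsub, hg m 𝓑 𝓜 hsub]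

lemma sum {κ : Type*} {s : Finset κ} {F : κ → Finset (Finset (Fin n)) → G}
    (hF : ∀ k ∈ s, IsValuation (F k)) : IsValuation fun 𝓑 ↦ ∑ k ∈ s, F k 𝓑 := by
  intro m 𝓑 𝓜 hsub
  simp_rw [smul_sum]
  rw [sum_comm]
  exact sum_eq_zero fun k hk ↦ hF k hk m 𝓑 𝓜 hsub

lemma smul_const {φ : Finset (Finset (Fin n)) → ℤ} (hφ : IsValuation φ) (x : G) :
    IsValuation fun 𝓑 ↦ φ 𝓑 • x := by
  intro m 𝓑 𝓜 hsub
  simp_rw [← smul_assoc]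
  rw [← sum_smul, hφ m 𝓑 𝓜 hsub, zero_smul]

end IsValuation

open Classical in
theorem isValuation_indicator_nonempty_inter {X : Set (Fin n → ℝ)} (hXclosed : IsClosed X)
    (hXconv : Convex ℝ X) :
    IsValuation fun 𝓑 ↦ if (polytope 𝓑 ∩ X).Nonempty then (1 : ℤ) else 0 := by
  intro m 𝓑 𝓜 hsub
  simp only [smul_eq_mul, mul_ite, mul_one, mul_zero, ← sum_filter, hsub.polytope_interMatroid]
  exact sum_filter_nonempty_inter_biInter_neg_one_pow_card hsub.2.2.1 (isCompact_polytope _)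
    (convex_polytope _) (fun i ↦ (isCompact_polytope _).isClosed) (fun i ↦ convex_polytope _)
    hXclosed hXconv

open Classical in
lemma isValuation_indicator_mem (B : Finset (Fin n)) :
    IsValuation fun 𝓑 ↦ if B ∈ 𝓑 then (1 : ℤ) else 0 := by
  simpa using isValuation_indicator_nonempty_inter (isClosed_singleton (x := indVec n B))
    (convex_singleton _)

open Classical in
lemma isValuation_indicator_eq_of_indicator_le {P : Type*} [PartialOrder P] [Finite P]
    {p : Finset (Finset (Fin n)) → Prop} {φ : Finset (Finset (Fin n)) → P}
    (h : ∀ x, IsValuation fun 𝓑 ↦ if p 𝓑 ∧ x ≤ φ 𝓑 then (1 : ℤ) else 0) (x : P) :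
    IsValuation fun 𝓑 ↦ if p 𝓑 ∧ φ 𝓑 = x then (1 : ℤ) else 0 := by
  have := Fintype.ofFinite P
  induction x using WellFoundedGT.induction with
  | ind x ih =>
    have hgt : IsValuation fun 𝓑 ↦ ∑ y with x < y, if p 𝓑 ∧ φ 𝓑 = y then (1 : ℤ) else 0 :=
      .sum fun y hy ↦ ih y (mem_filter.1 hy).2
    refine ((h x).sub hgt).congr fun 𝓑 _ ↦ ?_
    by_cases hp : p 𝓑
    · rcases eq_or_ne (φ 𝓑) x with rfl | hne
      · simp [hp]
      · simp [hp, hne, lt_iff_le_and_ne, hne.symm]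
    · simp [hp]

end Valuations

section ImprovingExchanges

variable {n : ℕ} {𝓑 : Finset (Finset (Fin n))} {w : Fin n → ℝ} {B : Finset (Fin n)}

/-- Some single exchange at `B` inside `𝓑` strictly increases the weight `w`. The activity
conditions at `B` say that no such exchange exists, for a suitable `w`. -/
def HasImprovingExchange (𝓑 : Finset (Finset (Fin n))) (w : Fin n → ℝ) (B : Finset (Fin n)) :
    Prop :=
  ∃ a, a ∉ B ∧ ∃ b ∈ B, insert a (B.erase b) ∈ 𝓑 ∧ w b < w a

lemma IsBases.eq_of_subset (h𝓑 : IsBases 𝓑) {B' : Finset (Fin n)} (hB : B ∈ 𝓑) (hB' : B' ∈ 𝓑)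
    (h : B ⊆ B') : B = B' := by
  refine h.antisymm fun b hb ↦ by_contra fun hbB ↦ ?_
  obtain ⟨a, ha, -⟩ := h𝓑 B' hB' B hB b (mem_sdiff.2 ⟨hb, hbB⟩)
  exact (mem_sdiff.1 ha).2 (h (mem_sdiff.1 ha).1)

theorem IsBases.hasImprovingExchange_of_lt (h𝓑 : IsBases 𝓑) (hB : B ∈ 𝓑) {B' : Finset (Fin n)}
    (hB' : B' ∈ 𝓑) (hlt : w ⬝ᵥ indVec n B < w ⬝ᵥ indVec n B') : HasImprovingExchange 𝓑 w B := by
  induction hk : #(B \ B') using Nat.strong_induction_on generalizing B' with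
  | _ k ih =>
    obtain ⟨b, hb⟩ : (B \ B').Nonempty := by
      rw [sdiff_nonempty]
      exact fun hsub ↦ hlt.ne (by rw [h𝓑.eq_of_subset hB hB' hsub])
    obtain ⟨a, ha, hBa, hB'b⟩ := h𝓑.exists_symm_exchange hB hB' hb
    have hsum := congrArg (w ⬝ᵥ ·) (indVec_insert_erase_add hb ha)
    simp only [dotProduct_add] at hsum
    -- The two exchanged bases have the same total weight as `B` and `B'`: either `B' - a ∪ b` still
    -- beats `B` and is closer to it, or the exchange `B - b ∪ a` improves `B`.
    by_cases hcloser : w ⬝ᵥ indVec n B < w ⬝ᵥ indVec n (insert b (B'.erase a))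
    · refine ih _ ?_ hB'b hcloser rfl
      rw [← hk]
      refine card_lt_card ((ssubset_iff_of_subset fun i hi ↦ ?_).2 ⟨b, hb, by simp⟩)
      grind
    · rw [mem_sdiff] at ha hb
      refine ⟨a, ha.2, b, hb.1, hBa, ?_⟩
      linarith [dotProduct_indVec_insert_erase w ha.2 hb.1]

/-- A polytope of points close to `e_B`, one third of the way along the exchange directions at `B`
that increase `w` (any fraction below one half would do). A matroid polytope meets it only if `B` is
a basis with an improving exchange: closeness to `e_B` forces the former, the larger weight the
latter. -/
def improvingPolytope (w : Fin n → ℝ) (B : Finset (Fin n)) : Set (Fin n → ℝ) :=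
  convexHull ℝ ((fun C ↦ (2 / 3 : ℝ) • indVec n B + (1 / 3 : ℝ) • indVec n C) ''
    {C | ∃ a, a ∉ B ∧ ∃ b ∈ B, C = insert a (B.erase b) ∧ w b < w a})

lemma isCompact_improvingPolytope (w : Fin n → ℝ) (B : Finset (Fin n)) :
    IsCompact (improvingPolytope w B) :=
  (Set.toFinite _).isCompact_convexHull ℝ

lemma dotProduct_lt_of_mem_improvingPolytope {x : Fin n → ℝ} (hx : x ∈ improvingPolytope w B) :
    w ⬝ᵥ indVec n B < w ⬝ᵥ x := by
  refine convexHull_min ?_ (convex_halfSpace_gt (dotProductBilin ℝ ℝ w).isLinear _) hx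
  rintro _ ⟨_, ⟨a, ha, b, hb, rfl, hab⟩, rfl⟩
  simp only [Set.mem_ofPred_eq, dotProductBilin_apply_apply, dotProduct_add, dotProduct_smul,
    dotProduct_indVec_insert_erase w ha hb, smul_eq_mul]
  linarith

lemma lt_signVec_dotProduct_of_mem_improvingPolytope {x : Fin n → ℝ}
    (hx : x ∈ improvingPolytope w B) :
    signVec B ⬝ᵥ indVec n B < signVec B ⬝ᵥ x + 1 := by
  rw [← sub_lt_iff_lt_add]
  refine convexHull_min ?_ (convex_halfSpace_gt (dotProductBilin ℝ ℝ (signVec B)).isLinear _) hx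
  rintro _ ⟨_, ⟨a, ha, b, hb, rfl, -⟩, rfl⟩
  have hsign : signVec B a = -1 ∧ signVec B b = 1 := by simp [signVec, ha, hb]
  simp only [Set.mem_ofPred_eq, dotProductBilin_apply_apply, dotProduct_add, dotProduct_smul,
    dotProduct_indVec_insert_erase _ ha hb, smul_eq_mul]
  linarith

theorem IsBases.polytope_inter_improvingPolytope_nonempty_iff (h𝓑 : IsBases 𝓑) :
    (polytope 𝓑 ∩ improvingPolytope w B).Nonempty ↔ B ∈ 𝓑 ∧ HasImprovingExchange 𝓑 w B := by
  constructor
  · rintro ⟨x, hx, hxB⟩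
    have hB : B ∈ 𝓑 := mem_of_mem_polytope_of_lt_signVec_dotProduct hx
      (lt_signVec_dotProduct_of_mem_improvingPolytope hxB)
    obtain ⟨B', hB', hle⟩ := exists_dotProduct_le_of_mem_polytope w hx
    exact ⟨hB, h𝓑.hasImprovingExchange_of_lt hB hB'
      ((dotProduct_lt_of_mem_improvingPolytope hxB).trans_le hle)⟩
  · rintro ⟨hB, a, ha, b, hb, hC, hab⟩
    refine ⟨_, ?_, subset_convexHull ℝ _ ⟨_, ⟨a, ha, b, hb, rfl, hab⟩, rfl⟩⟩
    exact convex_polytope 𝓑 (indVec_mem_polytope.2 hB) (indVec_mem_polytope.2 hC)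
      (by norm_num) (by norm_num) (by norm_num)

open Classical in
lemma isValuation_indicator_hasImprovingExchange (w : Fin n → ℝ) (B : Finset (Fin n)) :
    IsValuation fun 𝓑 ↦ if B ∈ 𝓑 ∧ HasImprovingExchange 𝓑 w B then (1 : ℤ) else 0 :=
  (isValuation_indicator_nonempty_inter (isCompact_improvingPolytope w B).isClosed
    (convex_convexHull ℝ _)).congr fun _ h𝓑 ↦ by
      simp only [h𝓑.polytope_inter_improvingPolytope_nonempty_iff]

end ImprovingExchanges

section Activities

variable {n : ℕ} {𝓑 : Finset (Finset (Fin n))} {B E I : Finset (Fin n)} {a b : Fin n}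

@[simp]
lemma mem_EAset : a ∈ EAset 𝓑 B ↔ ExtActive 𝓑 B a := by
  simp [EAset]

@[simp]
lemma mem_IAset : b ∈ IAset 𝓑 B ↔ IntActive 𝓑 B b := by
  simp [IAset]

/-- The weight on `[n]` whose increasing exchanges at `B` are exactly those that violate external
activity of an element of `E` or internal activity of an element of `I`. -/
def activityWeight (B E I : Finset (Fin n)) : Fin n → ℝ :=
  fun i ↦ if i ∈ E ∪ B \ I then (i : ℝ) else -(i : ℝ)

lemma activityWeight_lt_iff (hE : Disjoint E B) (ha : a ∉ B) (hb : b ∈ B) :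
    activityWeight B E I b < activityWeight B E I a ↔ a ∈ E ∧ b < a ∨ b ∈ I ∧ a < b := by
  have hbE : b ∉ E := fun h ↦ disjoint_left.1 hE h hb
  have hweight_a : activityWeight B E I a = if a ∈ E then (a : ℝ) else -a := by
    simp [activityWeight, ha]
  have hweight_b : activityWeight B E I b = if b ∈ I then -(b : ℝ) else b := by
    simp [activityWeight, hb, hbE]
  have hne : (a : ℕ) ≠ b := fun h ↦ ha (Fin.ext h ▸ hb)
  have hpos : (0 : ℝ) < a + b := by exact_mod_cast (by lia : 0 < (a : ℕ) + b)
  rw [hweight_a, hweight_b]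
  by_cases haE : a ∈ E <;> by_cases hbI : b ∈ I
  · simp only [haE, hbI, if_true, true_and, Fin.lt_def]
    exact iff_of_true (by linarith) hne.symm.lt_or_gt
  · simp [haE, hbI]
  · simp [haE, hbI]
  · simp only [haE, hbI, if_false, false_and, or_self, iff_false, not_lt]
    linarith

lemma subset_activities_iff_not_hasImprovingExchange (hE : Disjoint E B) (hI : I ⊆ B) :
    E ⊆ EAset 𝓑 B ∧ I ⊆ IAset 𝓑 B ↔ ¬HasImprovingExchange 𝓑 (activityWeight B E I) B := by
  constructor
  · rintro ⟨hEA, hIA⟩ ⟨a, ha, b, hb, hC, hlt⟩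
    rcases (activityWeight_lt_iff hE ha hb).1 hlt with ⟨haE, hba⟩ | ⟨hbI, hab⟩
    · exact hba.asymm ((mem_EAset.1 (hEA haE)).2 b hb hC)
    · exact hab.asymm ((mem_IAset.1 (hIA hbI)).2 a ha hC)
  · intro hnone
    refine ⟨fun a haE ↦ ?_, fun b hbI ↦ ?_⟩
    · have ha : a ∉ B := disjoint_left.1 hE haE
      refine mem_EAset.2 ⟨ha, fun b hb hC ↦ ?_⟩
      have hle : a ≤ b := not_lt.1 fun hba ↦
        hnone ⟨a, ha, b, hb, hC, (activityWeight_lt_iff hE ha hb).2 (.inl ⟨haE, hba⟩)⟩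
      exact hle.lt_of_ne (ne_of_mem_of_not_mem hb ha).symm
    · have hb : b ∈ B := hI hbI
      refine mem_IAset.2 ⟨hb, fun a ha hC ↦ ?_⟩
      have hle : b ≤ a := not_lt.1 fun hab ↦
        hnone ⟨a, ha, b, hb, hC, (activityWeight_lt_iff hE ha hb).2 (.inr ⟨hbI, hab⟩)⟩
      exact hle.lt_of_ne (ne_of_mem_of_not_mem hb ha)

open Classical in
lemma isValuation_indicator_subset_activities (B E I : Finset (Fin n)) :
    IsValuation fun 𝓑 ↦
      if B ∈ 𝓑 ∧ E ⊆ EAset 𝓑 B ∧ I ⊆ IAset 𝓑 B then (1 : ℤ) else 0 := by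
  by_cases hEI : Disjoint E B ∧ I ⊆ B
  · refine ((isValuation_indicator_mem B).sub (isValuation_indicator_hasImprovingExchange
      (activityWeight B E I) B)).congr fun 𝓑 _ ↦ ?_
    simp only [subset_activities_iff_not_hasImprovingExchange hEI.1 hEI.2]
    by_cases hB : B ∈ 𝓑 <;>
      by_cases hx : HasImprovingExchange 𝓑 (activityWeight B E I) B <;> simp [hB, hx]
  · have hnot : ∀ 𝓑, ¬(E ⊆ EAset 𝓑 B ∧ I ⊆ IAset 𝓑 B) := fun 𝓑 ⟨hE, hI⟩ ↦
      hEI ⟨disjoint_left.2 fun a ha ↦ (mem_EAset.1 (hE ha)).1,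
        fun b hb ↦ (mem_IAset.1 (hI hb)).1⟩
    intro m 𝓑 𝓜 _
    simp [hnot]

open Classical in
theorem isValuation_indicator_activities_eq (B E I : Finset (Fin n)) :
    IsValuation fun 𝓑 ↦
      if B ∈ 𝓑 ∧ EAset 𝓑 B = E ∧ IAset 𝓑 B = I then (1 : ℤ) else 0 := by
  simpa only [Prod.mk.injEq] using isValuation_indicator_eq_of_indicator_le
    (p := (B ∈ ·)) (φ := fun 𝓑 ↦ (EAset 𝓑 B, IAset 𝓑 B))
    (fun x ↦ by simpa only [Prod.le_def] using
      isValuation_indicator_subset_activities B x.1 x.2) (E, I)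

open Classical in
lemma sum_of_activities_eq_sum_indicator_smul (𝓑 : Finset (Finset (Fin n))) :
    ∑ B ∈ 𝓑, FreeAbelianGroup.of (B, EAset 𝓑 B, IAset 𝓑 B) =
      ∑ t : Finset (Fin n) × Finset (Fin n) × Finset (Fin n),
        (if t.1 ∈ 𝓑 ∧ EAset 𝓑 t.1 = t.2.1 ∧ IAset 𝓑 t.1 = t.2.2 then (1 : ℤ) else 0) •
          FreeAbelianGroup.of t := by
  simp only [ite_smul, one_smul, zero_smul, ← sum_filter]
  refine sum_bij (fun B _ ↦ (B, EAset 𝓑 B, IAset 𝓑 B)) (fun B hB ↦ by simpa using hB)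
    (fun _ _ _ _ h ↦ (Prod.mk.inj h).1) ?_ fun _ _ ↦ rfl
  rintro ⟨B, E, I⟩ ht
  simp only [mem_filter, mem_univ, true_and] at ht
  obtain ⟨hB, rfl, rfl⟩ := ht
  exact ⟨B, hB, rfl⟩

end Activities

open Classical in
/-- For fixed `B ⊆ [n]`, `E ⊆ [n] \ B`, `I ⊆ B`, the indicator
`G_{B,E,I}(M) = [B is a basis of M with E(B) = E and I(B) = I]` is a valuation;
consequently the basis-activity generating function
`F(M) = ∑_{B basis of M} (B, E(B), I(B))`, valued in the free abelian group on
triples `(B, E, I)`, is a valuation. -/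
theorem statement_17 (n : ℕ) :
    (∀ B E I : Finset (Fin n), (∀ a ∈ E, a ∉ B) → I ⊆ B →
      IsValuation fun 𝓑 : Finset (Finset (Fin n)) =>
        if B ∈ 𝓑 ∧ EAset 𝓑 B = E ∧ IAset 𝓑 B = I then (1 : ℤ) else 0) ∧
    IsValuation fun 𝓑 : Finset (Finset (Fin n)) =>
      ∑ B ∈ 𝓑, FreeAbelianGroup.of
        ((B, EAset 𝓑 B, IAset 𝓑 B) : Finset (Fin n) × Finset (Fin n) × Finset (Fin n)) := by
  refine ⟨fun B E I _ _ ↦ isValuation_indicator_activities_eq B E I, ?_⟩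
  simp only [sum_of_activities_eq_sum_indicator_smul]
  exact .sum fun t _ ↦ (isValuation_indicator_activities_eq t.1 t.2.1 t.2.2).smul_const _
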